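/- Let (L_l)_{l≥1} be any sequence of real numbers and define S_0 := 0 and S_k := max(S_{k−1}, 1)·L_k for k ≥ 1. Then for every m ≥ 0, max(S_m, 1) = Σ_{k=0}^{m} (1 − S_k)⁺ · Π_{l=k+1}^{m} L_l, where the empty product equals 1 and x⁺ := max(x, 0). -/

import Mathlib

/-- The deterministic CUSUM identity: if `S_0 = 0` and
`S_k = max(S_{k−1}, 1)·L_k` for `k ≥ 1`, then for every `m ≥ 0`,
`max(S_m, 1) = Σ_{k=0}^{m} (1 − S_k)⁺ · Π_{l=k+1}^{m} L_l`. -/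
theorem cusum_recursion_identity (L S : ℕ → ℝ) (hS0 : S 0 = 0)
    (hrec : ∀ k : ℕ, S (k + 1) = max (S k) 1 * L (k + 1)) (m : ℕ) :
    max (S m) 1
      = ∑ k ∈ Finset.range (m + 1), max (1 - S k) 0 * ∏ l ∈ Finset.Icc (k + 1) m, L l := by
  have hmax : ∀ x : ℝ, max x 1 = x + max (1 - x) 0 := fun x => by
    rw [← max_add_add_left, max_comm]; simp
  induction m with
  | zero => simp [hS0]
  | succ n ih =>
    -- The last summand is `(1 - S (n+1))⁺`; the others carry a common factor `L (n+1)`,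
    -- and by induction they add up to `max (S n) 1 * L (n+1) = S (n+1)`.
    rw [Finset.sum_range_succ, hmax (S (n + 1))]
    congr 1
    · rw [hrec n, ih, Finset.sum_mul]
      refine Finset.sum_congr rfl fun k hk => ?_
      rw [Finset.prod_Icc_succ_top (by have := Finset.mem_range.mp hk; omega), mul_assoc]
    · simp
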